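/- Recursion formula for the averaged iteration: let R be Hermitian with trace(R) = 1 and let B₁ be any d×d matrix. For unitaries U₁, …, U_{n−1} define B_{k+1} = B_k U_k − trace(R B_k U_k)·𝟙 and w_n = trace(R · B_n B_n†). Define the matrices A₁ = R and A_{k+1} = A_k + (1/d)·[trace(A_k)·R² − (R·A_k + A_k·R)]. Then for every n ≥ 1, the iterated Haar average ∫···∫ w_n(R, B₁, U₁, …, U_{n−1}) dμ(U₁)···dμ(U_{n−1}) equals trace(A_n · B₁ B₁†). -/

import Mathlib

open Matrix MeasureTheory

/-- The witness iteration: `witnessOpSeq R B₁ Us 0 = B₁` (playing the role of `B 1`) and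
`witnessOpSeq R B₁ Us (k+1) = Bₖ * Us k - trace(R * Bₖ * Us k) • 𝟙`, where
`Bₖ = witnessOpSeq R B₁ Us k`.  Thus `witnessOpSeq R B₁ Us (n-1)` is the paper's `B n`,
built from the unitaries `U₁ = Us 0, …, U_{n-1} = Us (n-2)`. -/
noncomputable def witnessOpSeq {d : ℕ} (R B₁ : Matrix (Fin d) (Fin d) ℂ)
    (Us : ℕ → Matrix (Fin d) (Fin d) ℂ) : ℕ → Matrix (Fin d) (Fin d) ℂ
  | 0 => B₁
  | k + 1 =>
      witnessOpSeq R B₁ Us k * Us k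
        - ((R * (witnessOpSeq R B₁ Us k * Us k)).trace) • (1 : Matrix (Fin d) (Fin d) ℂ)

/-- The averaged-iteration operators: `avgOpSeq R 0 = R` (playing the role of `A 1`) and
`avgOpSeq R k` is the paper's `A (k+1)`, via
`A_{k+1} = A_k + (1/d) • (trace(A_k) • R² - (R * A_k + A_k * R))`. -/
noncomputable def avgOpSeq {d : ℕ} (R : Matrix (Fin d) (Fin d) ℂ) : ℕ → Matrix (Fin d) (Fin d) ℂ
  | 0 => R
  | k + 1 =>
      avgOpSeq R k
        + ((d : ℂ))⁻¹ • ((avgOpSeq R k).trace • R ^ 2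
            - (R * avgOpSeq R k + avgOpSeq R k * R))

/-!
Left invariance under diagonal sign matrices makes distinct rows of a Haar random unitary `U`
uncorrelated, and invariance under permutation matrices gives all rows the same second moments;
orthonormality of the columns then fixes these, so that the average of
`trace(X U) * conj(trace(Y U))` is `trace(X Yᴴ) / d`. Expanding
`trace(A (B U - trace(R B U) 𝟙) (B U - trace(R B U) 𝟙)ᴴ)`, its average over `U` is therefore
`trace(T(A) B Bᴴ)` for a linear map `T`. Averaging over the last unitary first thus shortens the
iteration by one step at the cost of replacing `A` by `T(A)`, and induction for arbitrary `A`
concludes.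
-/

section Unitary

variable {ι α : Type*} [Fintype ι] [DecidableEq ι] [CommRing α] [StarRing α]

theorem diagonal_mem_unitaryGroup {v : ι → α} (hv : ∀ i, v i ∈ unitary α) :
    diagonal v ∈ unitaryGroup ι α := by
  rw [mem_unitaryGroup_iff, star_eq_conjTranspose, diagonal_conjTranspose, diagonal_mul_diagonal,
    ← diagonal_one]
  exact congrArg diagonal (funext fun i => Unitary.mul_star_self_of_mem (hv i))

theorem permMatrix_mem_unitaryGroup (σ : Equiv.Perm ι) :
    σ.permMatrix α ∈ unitaryGroup ι α := by
  rw [mem_unitaryGroup_iff, star_eq_conjTranspose, conjTranspose_permMatrix, ← permMatrix_mul,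
    inv_mul_cancel, permMatrix_one]

theorem sum_entry_mul_star_entry (U : unitaryGroup ι α) (j l : ι) :
    ∑ k, U k j * star (U k l) = if j = l then 1 else 0 := by
  have h := congrFun₂ (mem_unitaryGroup_iff'.mp U.2) l j
  simpa only [mul_apply, star_apply, one_apply, mul_comm, eq_comm] using h

end Unitary

section Integration

theorem integrable_of_continuous_of_compactSpace {X E : Type*} [TopologicalSpace X]
    [CompactSpace X] [MeasurableSpace X] [OpensMeasurableSpace X] [NormedAddCommGroup E]
    {ν : Measure X} [IsFiniteMeasureOnCompacts ν] {f : X → E} (hf : Continuous f) :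
    Integrable f ν :=
  hf.integrable_of_hasCompactSupport (.of_compactSpace f)

theorem integral_pi_succ_eq_integral_snoc {m : ℕ} {X E : Type*} [MeasurableSpace X]
    (ν : Measure X) [SigmaFinite ν] [NormedAddCommGroup E] [NormedSpace ℝ E]
    {f : (Fin (m + 1) → X) → E} (hf : Integrable f (Measure.pi fun _ => ν)) :
    ∫ x, f x ∂(Measure.pi fun _ => ν) =
      ∫ v : Fin m → X, ∫ x, f (Fin.snoc v x) ∂ν ∂(Measure.pi fun _ => ν) := by
  have hsplit := (measurePreserving_piFinSuccAbove (fun _ => ν) (Fin.last m)).symm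
  have hf' := (hsplit.integrable_comp_emb (MeasurableEquiv.measurableEmbedding _)).mpr hf
  rw [← hsplit.integral_comp']
  simpa only [Function.comp_def, MeasurableEquiv.piFinSuccAbove_symm_apply,
    Fin.insertNthEquiv, Equiv.coe_fn_mk, Fin.insertNth_last'] using integral_prod_symm _ hf'

end Integration

section SecondMoment

variable {ι 𝕜 : Type*} [Fintype ι] [DecidableEq ι] [RCLike 𝕜]

instance compactSpace_unitaryGroup : CompactSpace (unitaryGroup ι 𝕜) := by
  have hclosed : IsClosed (unitaryGroup ι 𝕜 : Set (Matrix ι ι 𝕜)) := isClosed_unitary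
  have hbox : IsCompact (Set.matrix (Metric.closedBall (0 : 𝕜) 1) : Set (Matrix ι ι 𝕜)) :=
    (isCompact_closedBall 0 1).matrix
  refine isCompact_iff_compactSpace.mp (hbox.of_isClosed_subset hclosed fun U hU i j => ?_)
  exact mem_closedBall_zero_iff.mpr (entry_norm_bound_of_unitary hU i j)

instance secondCountableTopology_unitaryGroup :
    SecondCountableTopology (unitaryGroup ι 𝕜) :=
  have : SecondCountableTopology (Matrix ι ι 𝕜) :=
    inferInstanceAs (SecondCountableTopology (ι → ι → 𝕜))
  inferInstanceAs (SecondCountableTopology (unitaryGroup ι 𝕜 : Set (Matrix ι ι 𝕜)))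

variable [MeasurableSpace (unitaryGroup ι 𝕜)] [BorelSpace (unitaryGroup ι 𝕜)]
  (μ : Measure (unitaryGroup ι 𝕜))

theorem integrable_entry_mul_star_entry [IsFiniteMeasure μ] (i j k l : ι) :
    Integrable (fun U : unitaryGroup ι 𝕜 => U i j * star (U k l)) μ :=
  integrable_of_continuous_of_compactSpace <|
    (continuous_subtype_val.matrix_elem i j).mul (continuous_subtype_val.matrix_elem k l).star

variable [μ.IsMulLeftInvariant]

theorem integral_entry_mul_star_entry_of_row_ne {i k : ι} (hik : i ≠ k) (j l : ι) :
    ∫ U : unitaryGroup ι 𝕜, U i j * star (U k l) ∂μ = 0 := by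
  have hflip : diagonal (Pi.mulSingle i (-1 : 𝕜)) ∈ unitaryGroup ι 𝕜 :=
    diagonal_mem_unitaryGroup fun a => by
      rcases eq_or_ne a i with rfl | ha
      · simp [Unitary.mem_iff]
      · simp [ha]
  refine integral_eq_zero_of_mul_left_eq_neg (g := ⟨_, hflip⟩) fun U => ?_
  simp [diagonal_mul, hik.symm]

theorem integral_entry_mul_star_entry_row_eq (i k j l : ι) :
    ∫ U : unitaryGroup ι 𝕜, U i j * star (U i l) ∂μ =
      ∫ U : unitaryGroup ι 𝕜, U k j * star (U k l) ∂μ := by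
  let P : unitaryGroup ι 𝕜 := ⟨_, permMatrix_mem_unitaryGroup (Equiv.swap i k)⟩
  have hP (U : unitaryGroup ι 𝕜) (b : ι) : (P * U) k b = U i b := by
    simp [P, Equiv.Perm.permMatrix, PEquiv.toMatrix_toPEquiv_mul]
  simpa only [hP] using
    integral_mul_left_eq_self (μ := μ) (fun U : unitaryGroup ι 𝕜 => U k j * star (U k l)) P

variable [IsProbabilityMeasure μ]

theorem integral_entry_mul_star_entry (i j k l : ι) :
    ∫ U : unitaryGroup ι 𝕜, U i j * star (U k l) ∂μ =
      if i = k ∧ j = l then (Fintype.card ι : 𝕜)⁻¹ else 0 := by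
  rcases ne_or_eq i k with hik | rfl
  · rw [integral_entry_mul_star_entry_of_row_ne μ hik, if_neg fun h => hik h.1]
  have : Nonempty ι := ⟨i⟩
  have hcard : (Fintype.card ι : 𝕜) ≠ 0 := Nat.cast_ne_zero.mpr Fintype.card_ne_zero
  have hsum : Fintype.card ι * ∫ U : unitaryGroup ι 𝕜, U i j * star (U i l) ∂μ =
      if j = l then 1 else 0 :=
    calc
      _ = ∑ k, ∫ U : unitaryGroup ι 𝕜, U k j * star (U k l) ∂μ := by
        rw [Finset.sum_congr rfl fun k _ => integral_entry_mul_star_entry_row_eq μ k i j l,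
          Finset.sum_const, Finset.card_univ, nsmul_eq_mul]
      _ = ∫ U : unitaryGroup ι 𝕜, ∑ k, U k j * star (U k l) ∂μ :=
        (integral_finsetSum _ fun k _ => integrable_entry_mul_star_entry μ k j k l).symm
      _ = if j = l then 1 else 0 := by
        simp only [sum_entry_mul_star_entry, integral_const, probReal_univ, one_smul]
  rw [eq_inv_mul_iff_mul_eq₀ hcard |>.mpr hsum]
  simp only [mul_ite, mul_one, mul_zero, true_and]

theorem integral_trace_mul_star_trace (X Y : Matrix ι ι 𝕜) :
    ∫ U : unitaryGroup ι 𝕜,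
        (X * (U : Matrix ι ι 𝕜)).trace * star (Y * (U : Matrix ι ι 𝕜)).trace ∂μ =
      (Fintype.card ι : 𝕜)⁻¹ * (X * Yᴴ).trace := by
  have hexpand (U : unitaryGroup ι 𝕜) :
      (X * (U : Matrix ι ι 𝕜)).trace * star (Y * (U : Matrix ι ι 𝕜)).trace =
        ∑ p : ι × ι, ∑ q : ι × ι,
          X p.1 p.2 * star (Y q.1 q.2) * (U p.2 p.1 * star (U q.2 q.1)) := by
    simp only [trace, diag_apply, mul_apply, ← Fintype.sum_prod_type', star_sum,
      Finset.sum_mul_sum, star_mul', mul_mul_mul_comm]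
  have hint (p q : ι × ι) : Integrable (fun U : unitaryGroup ι 𝕜 =>
      X p.1 p.2 * star (Y q.1 q.2) * (U p.2 p.1 * star (U q.2 q.1))) μ :=
    (integrable_entry_mul_star_entry μ _ _ _ _).const_mul _
  calc
    _ = ∑ p : ι × ι, ∑ q : ι × ι, X p.1 p.2 * star (Y q.1 q.2) *
          ∫ U : unitaryGroup ι 𝕜, U p.2 p.1 * star (U q.2 q.1) ∂μ := by
      simp_rw [hexpand, integral_finsetSum _ fun p _ => integrable_finsetSum _ fun q _ => hint p q,
        integral_finsetSum _ fun q _ => hint _ q, integral_const_mul]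
    _ = ∑ p : ι × ι, X p.1 p.2 * star (Y p.1 p.2) * (Fintype.card ι : 𝕜)⁻¹ := by
      refine Finset.sum_congr rfl fun p _ => ?_
      simp only [integral_entry_mul_star_entry, and_comm, ← Prod.ext_iff, mul_ite, mul_zero,
        Fintype.sum_ite_eq]
    _ = (Fintype.card ι : 𝕜)⁻¹ * (X * Yᴴ).trace := by
      simp only [Finset.mul_sum, mul_comm, trace, diag_apply, mul_apply, conjTranspose_apply,
        Fintype.sum_prod_type]

end SecondMoment

section Iteration

variable {ι α : Type*} [Fintype ι] [DecidableEq ι] [CommRing α]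

/-- The map `B ↦ B U - trace(R B U) 𝟙`, one step of the witness iteration. -/
def centeredStep (R B U : Matrix ι ι α) : Matrix ι ι α :=
  B * U - (R * (B * U)).trace • (1 : Matrix ι ι α)

/-- The witness iteration after `m` steps, driven by a finite tuple of matrices; the last entry of
the tuple is used in the last step. -/
def centeredIterate (R B : Matrix ι ι α) : {m : ℕ} → (Fin m → Matrix ι ι α) → Matrix ι ι α
  | 0, _ => B
  | _ + 1, V => centeredStep R (centeredIterate R B (Fin.init V)) (V (Fin.last _))

theorem continuous_centeredIterate [TopologicalSpace α] [IsTopologicalRing α]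
    (R B : Matrix ι ι α) (m : ℕ) :
    Continuous fun V : Fin m → Matrix ι ι α => centeredIterate R B V := by
  induction m with
  | zero => exact continuous_const
  | succ m ih =>
    have hinit : Continuous fun V : Fin (m + 1) → Matrix ι ι α =>
        centeredIterate R B (Fin.init V) :=
      ih.comp (by unfold Fin.init; fun_prop)
    simp only [centeredIterate, centeredStep]
    fun_prop

theorem trace_mul_centeredStep_mul_conjTranspose [StarRing α] (R A B : Matrix ι ι α)
    (U : unitaryGroup ι α) :
    (A * (centeredStep R B U * (centeredStep R B U)ᴴ)).trace =
      (A * (B * Bᴴ)).trace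
        - (A * B * (U : Matrix ι ι α)).trace * star (R * B * (U : Matrix ι ι α)).trace
        - (R * B * (U : Matrix ι ι α)).trace * star (Aᴴ * B * (U : Matrix ι ι α)).trace
        + A.trace *
          ((R * B * (U : Matrix ι ι α)).trace * star (R * B * (U : Matrix ι ι α)).trace) := by
  have hcancel : B * (U : Matrix ι ι α) * ((U : Matrix ι ι α)ᴴ * Bᴴ) = B * Bᴴ := by
    rw [Matrix.mul_assoc, ← Matrix.mul_assoc (U : Matrix ι ι α), ← star_eq_conjTranspose,
      mem_unitaryGroup_iff.mp U.2, Matrix.one_mul]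
  have hcross : star (Aᴴ * B * (U : Matrix ι ι α)).trace =
      (A * ((U : Matrix ι ι α)ᴴ * Bᴴ)).trace := by
    rw [← trace_conjTranspose, conjTranspose_mul, conjTranspose_mul, conjTranspose_conjTranspose,
      ← Matrix.mul_assoc, trace_mul_comm]
  rw [hcross, centeredStep, ← Matrix.mul_assoc R]
  simp only [conjTranspose_sub, conjTranspose_smul, conjTranspose_one, conjTranspose_mul,
    Matrix.sub_mul, Matrix.mul_sub, hcancel, trace_sub, Matrix.smul_mul, Matrix.mul_smul,
    trace_smul, Matrix.mul_one, Matrix.one_mul, smul_eq_mul, Matrix.mul_assoc]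
  ring

end Iteration

section Weight

variable {ι K : Type*} [Fintype ι] [Field K] [StarRing K]

/-- The action of one averaged step of the witness iteration on the weight `A` in
`trace(A B Bᴴ)`; for Hermitian `R` it is the recursion `A_k ↦ A_{k+1}`. -/
def averageStep (R A : Matrix ι ι K) : Matrix ι ι K :=
  A + (Fintype.card ι : K)⁻¹ • (A.trace • (Rᴴ * R) - (Rᴴ * A + A * R))

theorem trace_averageStep_mul (R A B : Matrix ι ι K) :
    (averageStep R A * (B * Bᴴ)).trace =
      (A * (B * Bᴴ)).trace
        - (Fintype.card ι : K)⁻¹ * (A * B * (R * B)ᴴ).trace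
        - (Fintype.card ι : K)⁻¹ * (R * B * (Aᴴ * B)ᴴ).trace
        + A.trace * ((Fintype.card ι : K)⁻¹ * (R * B * (R * B)ᴴ).trace) := by
  have hcycle (X Y : Matrix ι ι K) : (X * B * (Y * B)ᴴ).trace = (Yᴴ * X * (B * Bᴴ)).trace := by
    rw [conjTranspose_mul, ← Matrix.mul_assoc, trace_mul_comm]
    simp only [Matrix.mul_assoc]
  simp only [hcycle, conjTranspose_conjTranspose, averageStep, Matrix.add_mul, Matrix.sub_mul,
    Matrix.smul_mul, trace_add, trace_sub, trace_smul, smul_eq_mul]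
  ring

end Weight

section HaarAverage

variable {ι 𝕜 : Type*} [Fintype ι] [DecidableEq ι] [RCLike 𝕜]
  [MeasurableSpace (unitaryGroup ι 𝕜)] [BorelSpace (unitaryGroup ι 𝕜)]
  (μ : Measure (unitaryGroup ι 𝕜)) [μ.IsMulLeftInvariant] [IsProbabilityMeasure μ]

theorem integral_trace_mul_centeredStep (R A B : Matrix ι ι 𝕜) :
    ∫ U : unitaryGroup ι 𝕜, (A * (centeredStep R B U * (centeredStep R B U)ᴴ)).trace ∂μ =
      (averageStep R A * (B * Bᴴ)).trace := by
  simp_rw [trace_mul_centeredStep_mul_conjTranspose]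
  rw [integral_add, integral_sub, integral_sub, integral_const_mul, integral_const,
    probReal_univ, one_smul, trace_averageStep_mul]
  · simp only [integral_trace_mul_star_trace]
  all_goals exact integrable_of_continuous_of_compactSpace (by fun_prop)

theorem averaged_iteration_recursion_formula_general (R A B : Matrix ι ι 𝕜) (m : ℕ) :
    ∫ V : Fin m → unitaryGroup ι 𝕜,
        (A * (centeredIterate R B (fun k => (V k : Matrix ι ι 𝕜))
          * (centeredIterate R B (fun k => (V k : Matrix ι ι 𝕜)))ᴴ)).trace
        ∂(Measure.pi fun _ => μ) =
      ((averageStep R)^[m] A * (B * Bᴴ)).trace := by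
  induction m generalizing A with
  | zero => simp [centeredIterate]
  | succ m ih =>
    have hcont : Continuous fun V : Fin (m + 1) → unitaryGroup ι 𝕜 =>
        centeredIterate R B fun k => (V k : Matrix ι ι 𝕜) :=
      (continuous_centeredIterate R B (m + 1)).comp (by fun_prop)
    rw [integral_pi_succ_eq_integral_snoc μ
      (integrable_of_continuous_of_compactSpace (by fun_prop)), Function.iterate_succ_apply,
      ← ih (averageStep R A)]
    refine integral_congr_ae (.of_forall fun V => ?_)
    beta_reduce
    rw [← integral_trace_mul_centeredStep μ R A]
    simp only [centeredIterate, Fin.snoc_last, Fin.init_def, Fin.snoc_castSucc]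

end HaarAverage

section Specialization

variable {d : ℕ}

theorem witnessOpSeq_eq_centeredIterate (R B : Matrix (Fin d) (Fin d) ℂ)
    (Us : ℕ → Matrix (Fin d) (Fin d) ℂ) (m : ℕ) :
    witnessOpSeq R B Us m = centeredIterate R B fun k : Fin m => Us k := by
  induction m with
  | zero => rfl
  | succ m ih => rw [witnessOpSeq, ih]; rfl

theorem avgOpSeq_eq_iterate_averageStep {R : Matrix (Fin d) (Fin d) ℂ} (hR : R.IsHermitian)
    (m : ℕ) :
    avgOpSeq R m = (averageStep R)^[m] R := by
  induction m with
  | zero => rfl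
  | succ m ih =>
    rw [Function.iterate_succ_apply', ← ih, averageStep, avgOpSeq, hR.eq, pow_two,
      Fintype.card_fin]

end Specialization

/-- **Recursion formula for the averaged iteration.**
Let `μ` be the Haar probability measure on `U(d)`, `R` Hermitian with `trace R = 1`, and
`B₁` arbitrary.  For every `n ≥ 1`, the iterated Haar average of
`w n = trace(R * B n * B nᴴ)` over the unitaries `U₁, …, U_{n-1}` equals
`trace(A n * B₁ * B₁ᴴ)`, where `A₁ = R` and
`A_{k+1} = A_k + (1/d) • (trace(A_k) • R² - (R * A_k + A_k * R))`. -/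
theorem averaged_iteration_recursion_formula
    {d : ℕ}
    [MeasurableSpace (Matrix.unitaryGroup (Fin d) ℂ)]
    [BorelSpace (Matrix.unitaryGroup (Fin d) ℂ)]
    (μ : Measure (Matrix.unitaryGroup (Fin d) ℂ))
    [μ.IsHaarMeasure] [IsProbabilityMeasure μ]
    (R B₁ : Matrix (Fin d) (Fin d) ℂ)
    (hR : R.IsHermitian) (htrR : R.trace = 1) :
    ∀ n : ℕ, 1 ≤ n →
      ∫ V : Fin (n - 1) → Matrix.unitaryGroup (Fin d) ℂ,
          (R * (witnessOpSeq R B₁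
                  (fun k => if h : k < n - 1 then (V ⟨k, h⟩ : Matrix (Fin d) (Fin d) ℂ)
                    else 1) (n - 1)
                * (witnessOpSeq R B₁
                  (fun k => if h : k < n - 1 then (V ⟨k, h⟩ : Matrix (Fin d) (Fin d) ℂ)
                    else 1) (n - 1))ᴴ)).trace
        ∂(Measure.pi fun _ => μ)
      = (avgOpSeq R (n - 1) * (B₁ * B₁ᴴ)).trace := by
  intro n _
  simpa only [witnessOpSeq_eq_centeredIterate, Fin.is_lt, dite_true, Fin.eta,
    avgOpSeq_eq_iterate_averageStep hR] using
    averaged_iteration_recursion_formula_general μ R R B₁ (n - 1)
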